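/- For every ε > 0 there exists an infinite sequence t₁ < t₂ < ⋯ of positive integers containing no 3-term geometric progression with rational ratio, such that for all sufficiently large n, tₙ − tₙ₋₁ ≤ exp(2√(log 2 · log tₙ + ((3+ε)/2)·√(log 2 · log tₙ)·log log tₙ)). -/

import Mathlib

/-!
Prescribe an exponent `k q + 1` for every prime `q`, and let `S` consist of the `n` in which each
prime factor `q` has exponent `1` when `q ≤ y n` and exponent `k q + 1` when `q > y n`, for a
nondecreasing threshold `y`. As the threshold grows, exponents can only drop. So if `m < n` are in
`S` and every prime factor of `n` divides `m`, then `n ∣ m`, which is absurd; hence `n` divides no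
power of `m`, and in particular `m ^ 2 = l * n` is impossible.

To get small gaps, choose the `k q` independently at random from the geometric law of ratio `1 / 2`.
Take an interval `[a, a + H)` on which `y = H`. At least `H / 32` of its members are divisible by no
`p ^ 2` with `p ≤ H` prime. Such a `c` lies in `S` as soon as `k` takes the right values at the
prime factors of `c` exceeding `H`; these have total multiplicity at most `log_H c`, so this happens
with probability at least `2 ^ (-log_H c)`. A prime exceeding `H` divides at most one member of the
interval, so these events are independent, and `S` misses the interval with probability at most
`exp (-H / 32 * 2 ^ (-log_H (a + H)))`. On `[2 ^ j, 2 ^ (j + 1))` take `H ≈ 2 ^ (b √j)`, where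
`b > 1`. Then `log_H (a + H) ≤ √j / b + O(1)`, so the exponent grows faster than `j`, which beats
the union bound over the `2 ^ j` possible `a`, and Borel–Cantelli gives gaps of size `O(H)` almost
surely.
-/

open Real

section PrescribedExponents

open Finset

/-- The positive integers `n` in which a prime divisor `q` occurs to the power `1` if it is at most
the threshold `y n`, and to the power `k q + 1` otherwise. -/
def prescribedExponentSet (y k : ℕ → ℕ) : Set ℕ :=
  {n | 0 < n ∧ ∀ q ∈ n.primeFactors, n.factorization q = if q ≤ y n then 1 else k q + 1}

variable {y k : ℕ → ℕ} {m n : ℕ}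

lemma dvd_of_mem_prescribedExponentSet (hy : Monotone y) (hm : m ∈ prescribedExponentSet y k)
    (hn : n ∈ prescribedExponentSet y k) (hmn : m ≤ n) (hsub : n.primeFactors ⊆ m.primeFactors) :
    n ∣ m := by
  rw [← Nat.factorization_le_iff_dvd hn.1.ne' hm.1.ne']
  intro q
  by_cases hq : q ∈ n.primeFactors
  · rw [hn.2 q hq, hm.2 q (hsub hq)]
    have := hy hmn
    split_ifs <;> omega
  · rw [← Nat.support_factorization, Finsupp.notMem_support_iff] at hq
    simp [hq]

lemma not_dvd_pow_of_mem_prescribedExponentSet (hy : Monotone y)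
    (hm : m ∈ prescribedExponentSet y k) (hn : n ∈ prescribedExponentSet y k) (hmn : m < n)
    (e : ℕ) : ¬ n ∣ m ^ e := by
  intro hdvd
  have hsub : n.primeFactors ⊆ m.primeFactors := fun q hq =>
    have hprime := Nat.prime_of_mem_primeFactors hq
    Nat.mem_primeFactors.2 ⟨hprime,
      hprime.dvd_of_dvd_pow ((Nat.dvd_of_mem_primeFactors hq).trans hdvd), hm.1.ne'⟩
  exact (Nat.le_of_dvd hm.1 (dvd_of_mem_prescribedExponentSet hy hm hn hmn.le hsub)).not_gt hmn

/-- The prime factors of `c` exceeding `H`. -/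
def largePrimeFactors (H c : ℕ) : Finset ℕ := {q ∈ c.primeFactors | H < q}

/-- The integers in `[a, a + H)` that are not divisible by `p ^ 2` for any prime `p ≤ H`. -/
def smallSquareFreeIco (a H : ℕ) : Finset ℕ :=
  {c ∈ Ico a (a + H) | ∀ p ∈ Nat.primesLE H, ¬ p ^ 2 ∣ c}

lemma mem_prescribedExponentSet_of_mem_smallSquareFreeIco {a H c : ℕ} (hc0 : c ≠ 0)
    (hc : c ∈ smallSquareFreeIco a H) (hyc : y c = H)
    (hk : ∀ q ∈ largePrimeFactors H c, k q = c.factorization q - 1) :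
    c ∈ prescribedExponentSet y k := by
  refine ⟨Nat.pos_of_ne_zero hc0, fun q hq => ?_⟩
  have hprime := Nat.prime_of_mem_primeFactors hq
  have hpos : 1 ≤ c.factorization q :=
    (hprime.dvd_iff_one_le_factorization hc0).1 (Nat.dvd_of_mem_primeFactors hq)
  rw [hyc]
  split_ifs with hqH
  · have hsq := (mem_filter.1 hc).2 q (Nat.mem_primesLE.2 ⟨hqH, hprime⟩)
    rw [hprime.pow_dvd_iff_le_factorization hc0] at hsq
    omega
  · rw [hk q (mem_filter.2 ⟨hq, not_le.1 hqH⟩)]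
    omega

lemma pairwiseDisjoint_largePrimeFactors (a H : ℕ) :
    (Set.Ico a (a + H)).PairwiseDisjoint (largePrimeFactors H) := by
  intro c hc d hd hcd
  refine disjoint_left.2 fun q hqc hqd => hcd ?_
  simp only [largePrimeFactors, mem_filter] at hqc hqd
  have hmod : c ≡ d [MOD q] :=
    ((Nat.modEq_zero_iff_dvd.2 (Nat.dvd_of_mem_primeFactors hqc.1)).trans
      (Nat.modEq_zero_iff_dvd.2 (Nat.dvd_of_mem_primeFactors hqd.1)).symm)
  refine hmod.eq_of_abs_lt ?_
  have := hc.1; have := hc.2; have := hd.1; have := hd.2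
  rw [abs_lt]
  omega

lemma sum_factorization_largePrimeFactors_le_log (H : ℕ) {c : ℕ} (hH : 1 < H) (hc : c ≠ 0) :
    ∑ q ∈ largePrimeFactors H c, c.factorization q ≤ Nat.log H c := by
  refine Nat.le_log_of_pow_le hH ?_
  calc H ^ ∑ q ∈ largePrimeFactors H c, c.factorization q
      = ∏ q ∈ largePrimeFactors H c, H ^ c.factorization q := (prod_pow_eq_pow_sum _ _ _).symm
    _ ≤ ∏ q ∈ largePrimeFactors H c, q ^ c.factorization q :=
        prod_le_prod' fun q hq => Nat.pow_le_pow_left (mem_filter.1 hq).2.le _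
    _ ≤ ∏ q ∈ c.primeFactors, q ^ c.factorization q :=
        prod_le_prod_of_subset_of_one_le' (filter_subset _ _) fun q hq _ =>
          Nat.one_le_pow _ _ (Nat.pos_of_mem_primeFactors hq)
    _ = c := Nat.prod_factorization_pow_eq_self hc

end PrescribedExponents

section SmallSquareFree

open Finset

lemma card_filter_dvd_Ico_le (a H : ℕ) {r : ℕ} (hr : 0 < r) :
    (#{c ∈ Ico a (a + H) | r ∣ c} : ℚ) ≤ H / r + 1 := by
  have hcard := Nat.Ico_filter_modEq_card a (a + H) hr 0
  simp only [Nat.modEq_zero_iff_dvd, Nat.cast_zero, sub_zero, Nat.cast_add, add_div] at hcard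
  have hceil : (#{c ∈ Ico a (a + H) | r ∣ c} : ℤ) ≤ ⌈(H / r : ℚ)⌉ := by
    rw [hcard, max_le_iff]
    exact ⟨by linarith [Int.ceil_add_le (a / r : ℚ) (H / r)], Int.ceil_nonneg (by positivity)⟩
  calc (#{c ∈ Ico a (a + H) | r ∣ c} : ℚ) ≤ (⌈(H / r : ℚ)⌉ : ℚ) := by exact_mod_cast hceil
    _ ≤ H / r + 1 := (Int.ceil_lt_add_one _).le

lemma sum_primesLE_inv_sq_le (n : ℕ) : ∑ p ∈ Nat.primesLE n, ((p : ℚ) ^ 2)⁻¹ ≤ 11 / 18 := by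
  have hsub : Nat.primesLE n ⊆ {2, 3} ∪ Ioc 4 (n + 4) := by
    intro p hp
    have hle := Nat.le_of_mem_primesLE hp
    have hprime := Nat.prime_of_mem_primesLE hp
    have htwo := hprime.two_le
    have hfour : p ≠ 4 := by rintro rfl; norm_num at hprime
    simp only [mem_union, mem_insert, mem_singleton, mem_Ioc]
    omega
  have hdisj : Disjoint ({2, 3} : Finset ℕ) (Ioc 4 (n + 4)) := by simp
  have htail : ∑ p ∈ Ioc 4 (n + 4), ((p : ℚ) ^ 2)⁻¹ ≤ 1 / 4 := by
    refine (sum_Ioc_inv_sq_le_sub (by norm_num) (by omega)).trans ?_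
    have : (0 : ℚ) ≤ ((n + 4 : ℕ) : ℚ)⁻¹ := by positivity
    norm_num at this ⊢
    linarith
  calc ∑ p ∈ Nat.primesLE n, ((p : ℚ) ^ 2)⁻¹
      ≤ ∑ p ∈ {2, 3} ∪ Ioc 4 (n + 4), ((p : ℚ) ^ 2)⁻¹ :=
        sum_le_sum_of_subset_of_nonneg hsub fun _ _ _ => by positivity
    _ = 13 / 36 + ∑ p ∈ Ioc 4 (n + 4), ((p : ℚ) ^ 2)⁻¹ := by
        rw [sum_union hdisj]; norm_num
    _ ≤ 11 / 18 := by linarith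

lemma primeCounting_le_div_three_add_three {n : ℕ} (hn : 6 ≤ n) :
    (Nat.primeCounting n : ℚ) ≤ n / 3 + 3 := by
  have hle := Nat.primeCounting_add_le (a := 6) (k := 6) (by norm_num) le_rfl (n - 6)
  rw [Nat.add_sub_cancel' hn, show Nat.totient 6 = 2 by decide,
    show Nat.primeCounting 6 = 3 by decide] at hle
  have : 3 * Nat.primeCounting n ≤ n + 9 := by omega
  have : (3 : ℚ) * Nat.primeCounting n ≤ n + 9 := by exact_mod_cast this
  linarith

lemma card_le_card_smallSquareFreeIco_add (a H : ℕ) :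
    H ≤ #(smallSquareFreeIco a H) +
      ∑ p ∈ Nat.primesLE H, #{c ∈ Ico a (a + H) | p ^ 2 ∣ c} := by
  have hcover : Ico a (a + H) ⊆ smallSquareFreeIco a H ∪
      (Nat.primesLE H).biUnion fun p => {c ∈ Ico a (a + H) | p ^ 2 ∣ c} := by
    intro c hc
    simp only [smallSquareFreeIco, mem_union, mem_filter, mem_biUnion]
    grind
  calc H = #(Ico a (a + H)) := by simp
    _ ≤ _ := card_le_card hcover
    _ ≤ _ := card_union_le _ _
    _ ≤ _ := by gcongr; exact card_biUnion_le

lemma le_mul_card_smallSquareFreeIco (a : ℕ) {H : ℕ} (hH : 128 ≤ H) :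
    H ≤ 32 * #(smallSquareFreeIco a H) := by
  have hcover : (H : ℚ) ≤ #(smallSquareFreeIco a H) +
      ∑ p ∈ Nat.primesLE H, (#{c ∈ Ico a (a + H) | p ^ 2 ∣ c} : ℚ) := by
    exact_mod_cast card_le_card_smallSquareFreeIco_add a H
  have hmultiples : ∑ p ∈ Nat.primesLE H, (#{c ∈ Ico a (a + H) | p ^ 2 ∣ c} : ℚ) ≤
      H * (11 / 18) + (H / 3 + 3) := by
    calc ∑ p ∈ Nat.primesLE H, (#{c ∈ Ico a (a + H) | p ^ 2 ∣ c} : ℚ)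
        ≤ ∑ p ∈ Nat.primesLE H, (H * ((p : ℚ) ^ 2)⁻¹ + 1) := by
          refine sum_le_sum fun p hp => ?_
          have := card_filter_dvd_Ico_le a H (pow_pos (Nat.prime_of_mem_primesLE hp).pos 2)
          rwa [Nat.cast_pow, div_eq_mul_inv] at this
      _ = H * ∑ p ∈ Nat.primesLE H, ((p : ℚ) ^ 2)⁻¹ + Nat.primeCounting H := by
          rw [sum_add_distrib, ← mul_sum, sum_const, Nat.primesLE_card_eq_primeCounting,
            nsmul_one]
      _ ≤ H * (11 / 18) + (H / 3 + 3) := by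
          gcongr
          · exact sum_primesLE_inv_sq_le H
          · exact primeCounting_le_div_three_add_three (by omega)
  have hH' : (128 : ℚ) ≤ H := by exact_mod_cast hH
  have : (H : ℚ) ≤ 32 * #(smallSquareFreeIco a H) := by linarith
  exact_mod_cast this

end SmallSquareFree

section RandomExponents

open MeasureTheory ProbabilityTheory

lemma iIndepSet_infinitePi_pi {ι κ : Type*} {X : ι → Type*} [∀ i, MeasurableSpace (X i)]
    (μ : ∀ i, Measure (X i)) [∀ i, IsProbabilityMeasure (μ i)] {s : κ → Finset ι}
    (hs : Pairwise fun c d => Disjoint (s c) (s d)) {T : κ → ∀ i, Set (X i)}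
    (hT : ∀ c i, MeasurableSet (T c i)) :
    iIndepSet (fun c => (s c : Set ι).pi (T c)) (Measure.infinitePi μ) := by
  classical
  rw [iIndepSet_iff_meas_biInter fun c =>
    MeasurableSet.pi (s c).countable_toSet fun i _ => hT c i]
  intro F
  -- As the `s c` are disjoint, `U i` is the one constraint `T c i` with `i ∈ s c`.
  let U : ∀ i, Set (X i) := fun i => ⋂ c ∈ F, ⋂ _ : i ∈ s c, T c i
  have hU : ∀ c ∈ F, ∀ i ∈ s c, U i = T c i := by
    intro c hc i hi
    refine Set.Subset.antisymm (fun x hx => ?_) fun x hx => ?_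
    · simp only [U, Set.mem_iInter] at hx
      exact hx c hc hi
    · simp only [U, Set.mem_iInter]
      intro d _ hid
      obtain rfl : c = d := by
        by_contra hcd
        exact Finset.disjoint_left.1 (hs hcd) hi hid
      exact hx
  have hinter : ⋂ c ∈ F, (s c : Set ι).pi (T c) = ((F.biUnion s : Finset ι) : Set ι).pi U := by
    ext ω
    simp only [Set.mem_iInter, Set.mem_pi, Finset.mem_coe, Finset.mem_biUnion]
    constructor
    · rintro h i ⟨c, hc, hi⟩
      exact hU c hc i hi ▸ h c hc i hi
    · intro h c hc i hi
      exact hU c hc i hi ▸ h i ⟨c, hc, hi⟩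
  have hUm : ∀ i ∈ F.biUnion s, MeasurableSet (U i) := by
    intro i hi
    obtain ⟨c, hc, hic⟩ := Finset.mem_biUnion.1 hi
    exact hU c hc i hic ▸ hT c i
  rw [hinter, Measure.infinitePi_pi _ hUm, Finset.prod_biUnion fun c _ d _ hcd => hs hcd]
  refine Finset.prod_congr rfl fun c hc => ?_
  rw [Measure.infinitePi_pi _ fun i _ => hT c i]
  exact Finset.prod_congr rfl fun i hi => by rw [hU c hc i hi]

lemma measureReal_biInter_compl_le_exp {Ω κ : Type*} [MeasurableSpace Ω] {P : Measure Ω}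
    {C : Finset κ} {A : κ → Set Ω} {p : ℝ} (hA : ∀ c ∈ C, MeasurableSet (A c))
    (hind : iIndepSet (fun c : C => A c) P) (hp : ∀ c ∈ C, p ≤ P.real (A c)) :
    P.real (⋂ c ∈ C, (A c)ᶜ) ≤ exp (-(C.card * p)) := by
  have := hind.isProbabilityMeasure
  have hprod : P (⋂ c ∈ C, (A c)ᶜ) = ∏ c ∈ C, P (A c)ᶜ := by
    rw [← Finset.prod_coe_sort C fun c => P (A c)ᶜ,
      ← (iIndepSet_iff _ _).1 hind Finset.univ fun c _ =>
        (MeasurableSpace.measurableSet_generateFrom (Set.mem_singleton _)).compl]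
    simp [Set.iInter_subtype]
  calc P.real (⋂ c ∈ C, (A c)ᶜ) = ∏ c ∈ C, P.real (A c)ᶜ := by
        simp only [measureReal_def, hprod, ENNReal.toReal_prod]
    _ ≤ ∏ _c ∈ C, exp (-p) := by
        refine Finset.prod_le_prod (fun _ _ => measureReal_nonneg) fun c hc => ?_
        rw [probReal_compl_eq_one_sub (hA c hc)]
        linarith [hp c hc, add_one_le_exp (-p)]
    _ = exp (-(C.card * p)) := by rw [Finset.prod_const, ← exp_nat_mul, mul_neg]

/-- The law of independent random exponents, each equal to `n` with probability `2⁻¹ ^ (n + 1)`. -/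
noncomputable def randomExponents : Measure (ℕ → ℕ) :=
  Measure.infinitePi fun _ => geometricMeasure ⟨2⁻¹, by norm_num, by norm_num⟩

instance : IsProbabilityMeasure randomExponents := by
  unfold randomExponents; infer_instance

lemma randomExponents_real_pi_singleton (s : Finset ℕ) (v : ℕ → ℕ) :
    randomExponents.real ((s : Set ℕ).pi fun i => {v i}) = 2⁻¹ ^ ∑ i ∈ s, (v i + 1) := by
  have hhalf : (⟨2⁻¹, by norm_num, by norm_num⟩ : unitInterval) ≠ 0 := by
    simp [← Subtype.coe_ne_coe]
  rw [randomExponents, measureReal_def,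
    Measure.infinitePi_pi _ fun i _ => MeasurableSet.singleton (v i), ENNReal.toReal_prod,
    ← Finset.prod_pow_eq_pow_sum]
  refine Finset.prod_congr rfl fun i _ => ?_
  rw [← measureReal_def, geometricMeasure_real_singleton hhalf, pow_succ]
  norm_num

lemma pow_log_le_randomExponents_real {H c : ℕ} (hH : 1 < H) (hc : c ≠ 0) :
    2⁻¹ ^ Nat.log H c ≤ randomExponents.real
      ((largePrimeFactors H c : Set ℕ).pi fun q => {c.factorization q - 1}) := by
  have hsum : ∑ q ∈ largePrimeFactors H c, (c.factorization q - 1 + 1) =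
      ∑ q ∈ largePrimeFactors H c, c.factorization q := by
    refine Finset.sum_congr rfl fun q hq => Nat.sub_add_cancel ?_
    have hq' := (Finset.mem_filter.1 hq).1
    exact ((Nat.prime_of_mem_primeFactors hq').dvd_iff_one_le_factorization hc).1
      (Nat.dvd_of_mem_primeFactors hq')
  rw [randomExponents_real_pi_singleton, hsum]
  exact pow_le_pow_of_le_one (by norm_num) (by norm_num)
    (sum_factorization_largePrimeFactors_le_log H hH hc)

lemma randomExponents_real_disjoint_Ico_le {y : ℕ → ℕ} {a H : ℕ} (ha : 0 < a) (hH : 128 ≤ H)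
    (hy : ∀ c ∈ Set.Ico a (a + H), y c = H) :
    randomExponents.real {k | Disjoint (prescribedExponentSet y k) (Set.Ico a (a + H))} ≤
      exp (-(H / 32 * 2⁻¹ ^ Nat.log H (a + H))) := by
  let C := smallSquareFreeIco a H
  let A : ℕ → Set (ℕ → ℕ) := fun c =>
    (largePrimeFactors H c : Set ℕ).pi fun q => {c.factorization q - 1}
  have hIco : ∀ c ∈ C, c ∈ Set.Ico a (a + H) := fun c hc =>
    Finset.mem_Ico.1 (Finset.mem_filter.1 hc).1
  have hC0 : ∀ c ∈ C, c ≠ 0 := fun c hc => (ha.trans_le (hIco c hc).1).ne'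
  have hsub : {k | Disjoint (prescribedExponentSet y k) (Set.Ico a (a + H))} ⊆
      ⋂ c ∈ C, (A c)ᶜ := by
    intro k hk
    simp only [Set.mem_iInter]
    intro c hc hkc
    exact Set.disjoint_left.1 hk (mem_prescribedExponentSet_of_mem_smallSquareFreeIco (hC0 c hc) hc
      (hy c (hIco c hc)) hkc) (hIco c hc)
  have hind : iIndepSet (fun c : C => A c) randomExponents :=
    iIndepSet_infinitePi_pi (κ := C) _ (fun c d hcd => pairwiseDisjoint_largePrimeFactors a H
      (hIco c c.2) (hIco d d.2) (Subtype.coe_ne_coe.2 hcd)) fun _ _ => .of_discrete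
  have hprob : ∀ c ∈ C, 2⁻¹ ^ Nat.log H (a + H) ≤ randomExponents.real (A c) := fun c hc =>
    (pow_le_pow_of_le_one (by norm_num) (by norm_num) (Nat.log_mono_right (hIco c hc).2.le)).trans
      (pow_log_le_randomExponents_real (by omega) (hC0 c hc))
  have hcard : (H : ℝ) / 32 ≤ C.card := by
    rw [div_le_iff₀' (by norm_num)]
    exact_mod_cast le_mul_card_smallSquareFreeIco a hH
  calc _ ≤ randomExponents.real (⋂ c ∈ C, (A c)ᶜ) := measureReal_mono hsub
    _ ≤ exp (-(C.card * 2⁻¹ ^ Nat.log H (a + H))) := measureReal_biInter_compl_le_exp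
        (fun c _ => .pi (Finset.countable_toSet _) fun _ _ => .of_discrete) hind hprob
    _ ≤ _ := by gcongr

end RandomExponents

section RandomGaps

open Filter MeasureTheory

variable {ℓ : ℕ → ℕ}

lemma randomExponents_real_disjoint_Ico_le_of_dyadic {j a : ℕ} (hℓ : 128 ≤ ℓ j)
    (hlog : 32 * (2 * j + 1) * 2 ^ Nat.log (ℓ j) (2 ^ (j + 1)) ≤ ℓ j) (hlower : 2 ^ j ≤ a)
    (hupper : a + ℓ j ≤ 2 ^ (j + 1)) :
    randomExponents.real {k |
      Disjoint (prescribedExponentSet (fun n => ℓ (Nat.log 2 n)) k) (Set.Ico a (a + ℓ j))} ≤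
      exp (-(2 * j + 1)) := by
  have hthreshold : ∀ c ∈ Set.Ico a (a + ℓ j), ℓ (Nat.log 2 c) = ℓ j := fun c hc => by
    rw [Nat.log_eq_of_pow_le_of_lt_pow (hlower.trans hc.1) (hc.2.trans_le hupper)]
  have hpow : (2⁻¹ : ℝ) ^ Nat.log (ℓ j) (2 ^ (j + 1)) ≤ 2⁻¹ ^ Nat.log (ℓ j) (a + ℓ j) :=
    pow_le_pow_of_le_one (by norm_num) (by norm_num) (Nat.log_mono_right hupper)
  have hexponent : (2 * j + 1 : ℝ) ≤ ℓ j / 32 * 2⁻¹ ^ Nat.log (ℓ j) (2 ^ (j + 1)) := by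
    rw [inv_pow, ← div_eq_mul_inv, le_div_iff₀ (by positivity), le_div_iff₀' (by norm_num),
      ← mul_assoc]
    exact_mod_cast hlog
  calc _ ≤ exp (-(ℓ j / 32 * 2⁻¹ ^ Nat.log (ℓ j) (a + ℓ j))) :=
        randomExponents_real_disjoint_Ico_le ((by positivity : 0 < 2 ^ j).trans_le hlower) hℓ
          hthreshold
    _ ≤ exp (-(2 * j + 1)) := by
        gcongr
        exact hexponent.trans (by gcongr)

lemma randomExponents_real_exists_disjoint_Ico_le {j : ℕ} (hℓ : 128 ≤ ℓ j)
    (hlog : 32 * (2 * j + 1) * 2 ^ Nat.log (ℓ j) (2 ^ (j + 1)) ≤ ℓ j) :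
    randomExponents.real {k | ∃ a, 2 ^ j ≤ a ∧ a + ℓ j ≤ 2 ^ (j + 1) ∧
      Disjoint (prescribedExponentSet (fun n => ℓ (Nat.log 2 n)) k) (Set.Ico a (a + ℓ j))} ≤
      exp (-j) := by
  let B : ℕ → Set (ℕ → ℕ) := fun a => {k |
    Disjoint (prescribedExponentSet (fun n => ℓ (Nat.log 2 n)) k) (Set.Ico a (a + ℓ j))}
  let I : Finset ℕ := {a ∈ Finset.range (2 ^ (j + 1)) | 2 ^ j ≤ a ∧ a + ℓ j ≤ 2 ^ (j + 1)}
  have hcard : (I.card : ℝ) ≤ exp (j + 1) :=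
    calc (I.card : ℝ) ≤ 2 ^ (j + 1) := by
          exact_mod_cast (Finset.card_filter_le _ _).trans_eq (Finset.card_range _)
      _ ≤ exp 1 ^ (j + 1) := by
          gcongr
          linarith [add_one_le_exp 1]
      _ = exp (j + 1) := by rw [← exp_nat_mul, mul_one, Nat.cast_add_one]
  calc _ ≤ randomExponents.real (⋃ a ∈ I, B a) := by
        refine measureReal_mono (fun k ⟨a, hlower, hupper, hdisj⟩ => ?_) (measure_ne_top _ _)
        exact Set.mem_biUnion (Finset.mem_filter.2
          ⟨Finset.mem_range.2 (by omega), hlower, hupper⟩) hdisj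
    _ ≤ ∑ a ∈ I, randomExponents.real (B a) := measureReal_biUnion_finset_le _ _
    _ ≤ I.card • exp (-(2 * j + 1)) := Finset.sum_le_card_nsmul _ _ _ fun a ha =>
        have hrange := (Finset.mem_filter.1 ha).2
        randomExponents_real_disjoint_Ico_le_of_dyadic hℓ hlog hrange.1 hrange.2
    _ ≤ exp (j + 1) * exp (-(2 * j + 1)) := by
        rw [nsmul_eq_mul]
        gcongr
    _ = exp (-j) := by
        rw [← exp_add]
        ring_nf

lemma exists_prescribedExponentSet_inter_Ico_nonempty
    (hlog : ∀ᶠ j in atTop, 32 * (2 * j + 1) * 2 ^ Nat.log (ℓ j) (2 ^ (j + 1)) ≤ ℓ j) :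
    ∃ k, ∀ᶠ j in atTop, ∀ a, 2 ^ j ≤ a → a + ℓ j ≤ 2 ^ (j + 1) →
      (prescribedExponentSet (fun n => ℓ (Nat.log 2 n)) k ∩ Set.Ico a (a + ℓ j)).Nonempty := by
  let B : ℕ → Set (ℕ → ℕ) := fun j => {k | ∃ a, 2 ^ j ≤ a ∧ a + ℓ j ≤ 2 ^ (j + 1) ∧
    Disjoint (prescribedExponentSet (fun n => ℓ (Nat.log 2 n)) k) (Set.Ico a (a + ℓ j))}
  have hsummable : Summable fun j => randomExponents.real (B j) := by
    refine summable_exp_neg_nat.of_norm_bounded_eventually_nat ?_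
    filter_upwards [hlog, eventually_ge_atTop 2] with j hj hj2
    have hℓ : 128 ≤ ℓ j := by
      refine le_trans ?_ ((Nat.le_mul_of_pos_right _ (by positivity)).trans hj)
      omega
    rw [norm_of_nonneg measureReal_nonneg]
    exact randomExponents_real_exists_disjoint_Ico_le hℓ hj
  have hsum : ∑' j, randomExponents (B j) ≠ ⊤ := by
    convert hsummable.tsum_ofReal_ne_top using 3
    exact .symm (ofReal_measureReal (measure_ne_top _ _))
  obtain ⟨k, hk⟩ := (ae_eventually_notMem hsum).exists
  refine ⟨k, hk.mono fun j hj a hlower hupper => ?_⟩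
  rw [← Set.not_disjoint_iff_nonempty_inter]
  exact fun hdisj => hj ⟨a, hlower, hupper, hdisj⟩

end RandomGaps

section Gaps

open Filter

variable {S : Set ℕ} {ℓ d : ℕ → ℕ}

lemma infinite_of_inter_Ico_nonempty_of_dyadic (hle : ∀ᶠ j in atTop, ℓ j ≤ 2 ^ j)
    (hS : ∀ᶠ j in atTop, ∀ a, 2 ^ j ≤ a → a + ℓ j ≤ 2 ^ (j + 1) →
      (S ∩ Set.Ico a (a + ℓ j)).Nonempty) :
    S.Infinite := by
  refine Set.infinite_of_forall_exists_gt fun m => ?_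
  obtain ⟨j, hj, hSj, hmj⟩ := (hle.and (hS.and (eventually_ge_atTop m))).exists
  obtain ⟨s, hs, hjs, -⟩ := hSj (2 ^ j) le_rfl (by rw [pow_succ]; omega)
  exact ⟨s, hs, hmj.trans_lt (Nat.lt_two_pow_self.trans_le hjs)⟩

lemma eventually_inter_Ico_sub_two_mul_nonempty (hmono : Monotone ℓ)
    (hle : ∀ᶠ j in atTop, ℓ j ≤ 2 ^ j)
    (hS : ∀ᶠ j in atTop, ∀ a, 2 ^ j ≤ a → a + ℓ j ≤ 2 ^ (j + 1) →
      (S ∩ Set.Ico a (a + ℓ j)).Nonempty) :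
    ∀ᶠ x in atTop, (S ∩ Set.Ico (x - 2 * ℓ (Nat.log 2 x)) x).Nonempty := by
  obtain ⟨J, hJ⟩ := eventually_atTop.1 (hle.and hS)
  filter_upwards [eventually_ge_atTop (2 ^ (J + 1))] with x hx
  have hx0 : x ≠ 0 := ((by positivity : 0 < 2 ^ (J + 1)).trans_le hx).ne'
  have hJx : J + 1 ≤ Nat.log 2 x := Nat.le_log_of_pow_le one_lt_two hx
  obtain ⟨j, hj⟩ : ∃ j, Nat.log 2 x = j + 1 := Nat.exists_eq_add_one.2 (by omega)
  have hlower : 2 ^ (j + 1) ≤ x := hj ▸ Nat.pow_log_le_self 2 hx0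
  have hupper : x < 2 ^ (j + 1 + 1) := hj ▸ Nat.lt_pow_succ_log_self one_lt_two x
  have hℓ : ℓ j ≤ ℓ (j + 1) := hmono j.le_succ
  rw [hj]
  rcases le_total (2 ^ (j + 1) + ℓ (j + 1)) x with hfit | hshort
  · refine ((hJ (j + 1) (by omega)).2 (x - ℓ (j + 1)) (by omega) (by omega)).mono ?_
    exact Set.inter_subset_inter_right S (Set.Ico_subset_Ico (by omega) (by omega))
  · have := pow_succ 2 j
    obtain ⟨hℓj, hSj⟩ := hJ j (by omega)
    refine (hSj (2 ^ (j + 1) - ℓ j) (by omega) (by omega)).mono ?_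
    exact Set.inter_subset_inter_right S (Set.Ico_subset_Ico (by omega) (by omega))

lemma eventually_nth_succ_le_nth_add (hinf : S.Infinite)
    (hS : ∀ᶠ x in atTop, (S ∩ Set.Ico (x - d x) x).Nonempty) :
    ∀ᶠ n in atTop, Nat.nth (· ∈ S) (n + 1) ≤ Nat.nth (· ∈ S) n + d (Nat.nth (· ∈ S) (n + 1)) := by
  have htendsto : Tendsto (fun n => Nat.nth (· ∈ S) (n + 1)) atTop atTop :=
    (Nat.nth_strictMono hinf).tendsto_atTop.comp (tendsto_add_atTop_nat 1)
  filter_upwards [htendsto.eventually hS] with n ⟨s, hs, hlower, hupper⟩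
  have := Nat.le_nth_of_lt_nth_succ hupper hs
  omega

end Gaps

section BlockLength

open Filter

/-- The length `⌈2 ^ (b √j)⌉` of the intervals inside `[2 ^ j, 2 ^ (j + 1)]` that the random set is
made to meet. -/
noncomputable def blockLength (b : ℝ) (j : ℕ) : ℕ := ⌈(2 : ℝ) ^ (b * √j)⌉₊

variable {b : ℝ}

lemma blockLength_mono (hb : 0 ≤ b) : Monotone (blockLength b) := fun i j hij => by
  unfold blockLength
  gcongr
  norm_num

lemma eventually_blockLength_le_two_pow (b : ℝ) : ∀ᶠ j in atTop, blockLength b j ≤ 2 ^ j := by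
  have hsqrt : Tendsto (fun j : ℕ => √(j : ℝ)) atTop atTop :=
    tendsto_sqrt_atTop.comp tendsto_natCast_atTop_atTop
  filter_upwards [hsqrt.eventually_ge_atTop b] with j hj
  rw [blockLength, Nat.ceil_le, Nat.cast_pow, Nat.cast_ofNat, ← rpow_natCast]
  refine rpow_le_rpow_of_exponent_le one_le_two ?_
  calc b * √j ≤ √j * √j := by gcongr
    _ = j := mul_self_sqrt j.cast_nonneg

lemma natLog_blockLength_two_pow_le (hb : 1 ≤ b) {j : ℕ} (hj : 1 ≤ j) :
    (Nat.log (blockLength b j) (2 ^ (j + 1)) : ℝ) ≤ b⁻¹ * √j + 1 := by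
  have hs : 1 ≤ √(j : ℝ) := one_le_sqrt.2 (by exact_mod_cast hj)
  have hlog : b * √j * log 2 ≤ log (blockLength b j) := by
    rw [← log_rpow two_pos]
    exact log_le_log (by positivity) (Nat.le_ceil _)
  calc (Nat.log (blockLength b j) (2 ^ (j + 1)) : ℝ)
      ≤ logb (blockLength b j) (2 ^ (j + 1) : ℕ) := natLog_le_logb _ _
    _ = (j + 1) * log 2 / log (blockLength b j) := by
        rw [logb, Nat.cast_pow, log_pow, Nat.cast_add_one, Nat.cast_ofNat]
    _ ≤ (j + 1) * log 2 / (b * √j * log 2) := by gcongr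
    _ = (√j * √j + 1) / (b * √j) := by
        rw [mul_div_mul_right _ _ (log_pos one_lt_two).ne', mul_self_sqrt j.cast_nonneg]
    _ = b⁻¹ * √j + 1 / (b * √j) := by field_simp
    _ ≤ b⁻¹ * √j + 1 := by
        gcongr
        exact div_le_one_of_le₀ (one_le_mul_of_one_le_of_one_le hb hs) (by positivity)

lemma eventually_mul_le_two_rpow_mul_sqrt (C : ℝ) {r : ℝ} (hr : 0 < r) :
    ∀ᶠ j : ℕ in atTop, C * j ≤ 2 ^ (r * √j) := by
  have hlittle := (tendsto_sqrt_atTop.comp tendsto_natCast_atTop_atTop).eventually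
    (((isLittleO_pow_exp_pos_mul_atTop 2 (mul_pos (log_pos one_lt_two) hr)).const_mul_left C).bound
      one_pos)
  filter_upwards [hlittle] with j hj
  rw [Function.comp_apply, sq_sqrt j.cast_nonneg, norm_of_nonneg (exp_nonneg _), one_mul] at hj
  rw [rpow_def_of_pos two_pos, ← mul_assoc]
  exact (le_norm_self _).trans hj

lemma eventually_mul_two_pow_natLog_le_blockLength (hb : 1 < b) :
    ∀ᶠ j in atTop,
      32 * (2 * j + 1) * 2 ^ Nat.log (blockLength b j) (2 ^ (j + 1)) ≤ blockLength b j := by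
  have hb' : 0 < b - b⁻¹ := sub_pos.2 ((inv_lt_one_of_one_lt₀ hb).trans hb)
  filter_upwards [eventually_mul_le_two_rpow_mul_sqrt 192 hb', eventually_ge_atTop 1]
    with j hlinear hj
  have hlog := natLog_blockLength_two_pow_le hb.le hj
  have hreal : 32 * (2 * j + 1) * (2 : ℝ) ^ Nat.log (blockLength b j) (2 ^ (j + 1)) ≤
      blockLength b j :=
    calc 32 * (2 * j + 1) * (2 : ℝ) ^ Nat.log (blockLength b j) (2 ^ (j + 1))
        ≤ 32 * (3 * j) * 2 ^ (b⁻¹ * √j + 1) := by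
          have : (1 : ℝ) ≤ j := by exact_mod_cast hj
          rw [← rpow_natCast 2 (Nat.log _ _)]
          gcongr
          · linarith
          · norm_num
      _ = 192 * j * 2 ^ (b⁻¹ * √j) := by
          rw [rpow_add_one two_ne_zero]
          ring
      _ ≤ 2 ^ ((b - b⁻¹) * √j) * 2 ^ (b⁻¹ * √j) := by gcongr
      _ = 2 ^ (b * √j) := by
          rw [← rpow_add two_pos]
          ring_nf
      _ ≤ blockLength b j := Nat.le_ceil _
  exact_mod_cast hreal

lemma two_mul_blockLength_natLog_le (hb : 0 ≤ b) {x : ℕ} (hx : x ≠ 0) :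
    2 * (blockLength b (Nat.log 2 x) : ℝ) ≤ 4 * exp (b * √(log 2 * log x)) := by
  set j := Nat.log 2 x
  have hjlog : j * log 2 ≤ log x := by
    rw [← log_pow]
    exact log_le_log (by positivity) (by exact_mod_cast Nat.pow_log_le_self 2 hx)
  have hsqrt : log 2 * √j ≤ √(log 2 * log x) := by
    refine le_sqrt_of_sq_le ?_
    rw [mul_pow, sq_sqrt j.cast_nonneg, sq, mul_assoc, mul_comm _ (j : ℝ)]
    gcongr
  have hpow : (1 : ℝ) ≤ 2 ^ (b * √j) := one_le_rpow one_le_two (by positivity)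
  calc 2 * (blockLength b j : ℝ) ≤ 2 * (2 ^ (b * √j) + 1) := by
        gcongr
        exact (Nat.ceil_lt_add_one (by positivity)).le
    _ ≤ 4 * 2 ^ (b * √j) := by linarith
    _ = 4 * exp (b * (log 2 * √j)) := by
        rw [rpow_def_of_pos two_pos]
        ring_nf
    _ ≤ 4 * exp (b * √(log 2 * log x)) := by gcongr

lemma eventually_two_mul_blockLength_natLog_le_exp {c : ℝ} (hb : 0 ≤ b) (hbc : b < c) :
    ∀ᶠ x : ℕ in atTop,
      2 * (blockLength b (Nat.log 2 x) : ℝ) ≤ exp (c * √(log 2 * log x)) := by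
  have htendsto : Tendsto (fun x : ℕ => (c - b) * √(log 2 * log x)) atTop atTop :=
    (tendsto_sqrt_atTop.comp <| (tendsto_log_atTop.comp tendsto_natCast_atTop_atTop).const_mul_atTop
      (log_pos one_lt_two)).const_mul_atTop (sub_pos.2 hbc)
  filter_upwards [htendsto.eventually_ge_atTop (log 4), eventually_ne_atTop 0] with x hx hx0
  calc 2 * (blockLength b (Nat.log 2 x) : ℝ) ≤ 4 * exp (b * √(log 2 * log x)) :=
        two_mul_blockLength_natLog_le hb hx0
    _ ≤ exp ((c - b) * √(log 2 * log x)) * exp (b * √(log 2 * log x)) := by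
        gcongr
        exact (log_le_iff_le_exp (by norm_num)).1 hx
    _ = exp (c * √(log 2 * log x)) := by
        rw [← exp_add]
        ring_nf

end BlockLength

section

open Filter

theorem gpf_small_gaps_general (c : ℝ) (hc : 1 < c) :
    ∃ t : ℕ → ℕ, StrictMono t ∧ (∀ n, 0 < t n) ∧ (∀ m n e, m < n → ¬ t n ∣ t m ^ e) ∧
      ∃ N, ∀ n ≥ N, (t (n + 1) : ℝ) - t n ≤ exp (c * √(log 2 * log (t (n + 1)))) := by
  obtain ⟨b, hb, hbc⟩ := exists_between hc
  have hb0 : 0 ≤ b := zero_le_one.trans hb.le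
  obtain ⟨k, hk⟩ := exists_prescribedExponentSet_inter_Ico_nonempty
    (eventually_mul_two_pow_natLog_le_blockLength hb)
  set S := prescribedExponentSet (fun n => blockLength b (Nat.log 2 n)) k
  have hle := eventually_blockLength_le_two_pow b
  have hinf : S.Infinite := infinite_of_inter_Ico_nonempty_of_dyadic hle hk
  have hmem : ∀ n, Nat.nth (· ∈ S) n ∈ S := Nat.nth_mem_of_infinite hinf
  have hstrict : StrictMono (Nat.nth (· ∈ S)) := Nat.nth_strictMono hinf
  have hgap := eventually_nth_succ_le_nth_add hinf
    (eventually_inter_Ico_sub_two_mul_nonempty (blockLength_mono hb0) hle hk)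
  have hexp := (hstrict.tendsto_atTop.comp (tendsto_add_atTop_nat 1)).eventually
    (eventually_two_mul_blockLength_natLog_le_exp hb0 hbc)
  refine ⟨Nat.nth (· ∈ S), hstrict, fun n => (hmem n).1, fun m n e hmn =>
    not_dvd_pow_of_mem_prescribedExponentSet ((blockLength_mono hb0).comp Nat.log_monotone)
      (hmem m) (hmem n) (hstrict hmn) e, eventually_atTop.1 ?_⟩
  filter_upwards [hgap, hexp] with n hn hn'
  refine le_trans ?_ hn'
  rw [sub_le_iff_le_add']
  exact_mod_cast hn

end

/-- There exists a sequence with small gaps containing no 3-term geometric progression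
with rational ratio (equivalently, no triple a < b < c in the set with b² = a·c). -/
theorem gpf_small_gaps (ε : ℝ) (hε : 0 < ε) :
    ∃ t : ℕ → ℕ, StrictMono t ∧ (∀ n, 0 < t n) ∧
      (∀ a b c : ℕ, a ∈ Set.range t → b ∈ Set.range t → c ∈ Set.range t →
        a < b → b < c → b * b ≠ a * c) ∧
      ∃ N : ℕ, ∀ n ≥ N,
        ((t (n + 1) : ℝ) - t n) ≤
          exp (2 * Real.sqrt (log 2 * log (t (n + 1)) +
            ((3 + ε) / 2) * Real.sqrt (log 2 * log (t (n + 1))) * log (log (t (n + 1))))) := by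
  obtain ⟨t, hstrict, hpos, hdvd, N, hgap⟩ := gpf_small_gaps_general 2 one_lt_two
  refine ⟨t, hstrict, hpos, ?_, max N 2, fun n hn => (hgap n (le_of_max_le_left hn)).trans ?_⟩
  · rintro a _ _ - ⟨m, rfl⟩ ⟨n, rfl⟩ - hmn hsq
    exact hdvd m n 2 (hstrict.lt_iff_lt.1 hmn) (by rw [sq, hsq]; exact dvd_mul_left _ _)
  · have hthree : (3 : ℝ) ≤ t (n + 1) := by
      have := hstrict.le_apply (x := n + 1)
      exact_mod_cast (by omega : 3 ≤ t (n + 1))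
    have hlog : 1 ≤ log (t (n + 1)) :=
      (le_log_iff_exp_le (by linarith)).2 (exp_one_lt_three.le.trans hthree)
    have hloglog : 0 ≤ log (log (t (n + 1))) := log_nonneg hlog
    gcongr
    exact le_add_of_nonneg_right (by positivity)
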